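/- Let M be a finite monoid equipped with a Wilke ω-power ω. On subsets of M, consider the pointwise product, the merge operation K, and the operation Ω(X) := {p·ω(q) : p, q ∈ ⟨X⟩}, where ⟨X⟩ denotes the subsemigroup of M generated by X (all products of nonempty finite sequences of elements of X). Then M is aperiodic if and only if the least collection of subsets of M that contains every singleton {x} for x ∈ M and is closed under pointwise product, K, and Ω consists only of singletons. -/

import Mathlib

open Pointwise

/-- The merge of a subset `A` of a monoid: `K(A) = ⋂_{n≥1} ⋃_{m≥n} A^m`,
where `A^m` is the `m`-fold pointwise product. -/
def mergeSet {M : Type*} [Monoid M] (A : Set M) : Set M :=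
  ⋂ (n : ℕ) (_ : 1 ≤ n), ⋃ (m : ℕ) (_ : n ≤ m), A ^ m

/-- The subsemigroup of a monoid generated by a set `X`: all products of
nonempty finite sequences of elements of `X`. -/
def genSubsemigroup {M : Type*} [Monoid M] (X : Set M) : Set M :=
  {x : M | ∃ l : List M, l ≠ [] ∧ (∀ a ∈ l, a ∈ X) ∧ l.prod = x}

/-- `Ω(X) = {p·ω(q) : p, q ∈ ⟨X⟩}`. -/
def bigOmega {M : Type*} [Monoid M] (om : M → M) (X : Set M) : Set M :=
  {z : M | ∃ p ∈ genSubsemigroup X, ∃ q ∈ genSubsemigroup X, z = p * om q}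

/-- The least collection of subsets of `M` containing every singleton and
closed under pointwise product, merge `K` and `Ω`. -/
def satColl {M : Type*} [Monoid M] (om : M → M) : Set (Set M) :=
  ⋂₀ {C : Set (Set M) | (∀ x : M, {x} ∈ C) ∧ (∀ X ∈ C, ∀ Y ∈ C, X * Y ∈ C) ∧
      (∀ X ∈ C, mergeSet X ∈ C) ∧ ∀ X ∈ C, bigOmega om X ∈ C}

/-!
If `K({x}) = {y}`, then `x * y = y`, because `A * K(A) ⊆ K(A)`; as `y` is itself a power `x ^ n`,
this says `x ^ (n + 1) = x ^ n`. Conversely, if `x ^ (n + 1) = x ^ n`, then the powers of `x` are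
eventually constant and `K({x}) = {x ^ n}`. Since `Ω({x}) = {ω(x)}` in every case, the merge is the
only one of the operations that can lead out of the singletons.
-/

section Merge

open Filter

variable {M : Type*} [Monoid M] {A : Set M} {x y e : M} {n : ℕ}

lemma pow_mul_eq_of_mul_eq (h : x * e = e) (n : ℕ) : x ^ n * e = e :=
  (MulAction.stabilizerSubmonoid M e).pow_mem h n

lemma mem_mergeSet_iff_frequently : y ∈ mergeSet A ↔ ∃ᶠ n in atTop, y ∈ A ^ n := by
  simp only [mergeSet, Set.mem_iInter, Set.mem_iUnion, exists_prop]
  exact (atTop_basis' 1).frequently_iff.symm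

lemma mem_mergeSet_singleton_iff_frequently :
    y ∈ mergeSet {x} ↔ ∃ᶠ n in atTop, x ^ n = y := by
  simp only [mem_mergeSet_iff_frequently, Set.singleton_pow, Set.mem_singleton_iff, eq_comm]

lemma mul_mergeSet_subset : A * mergeSet A ⊆ mergeSet A := by
  rintro _ ⟨a, ha, y, hy, rfl⟩
  rw [mem_mergeSet_iff_frequently] at hy ⊢
  refine (tendsto_add_atTop_nat 1).frequently (hy.mono fun n hn => ?_)
  rw [pow_succ']
  exact Set.mul_mem_mul ha hn

lemma mergeSet_singleton_of_pow_succ_eq (h : x ^ (n + 1) = x ^ n) :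
    mergeSet {x} = {x ^ n} := by
  have pow_eventually_eq : ∀ᶠ m in atTop, x ^ m = x ^ n := by
    filter_upwards [eventually_ge_atTop n] with m hm
    rw [← pow_sub_mul_pow x hm]
    exact pow_mul_eq_of_mul_eq (by rwa [← pow_succ']) (m - n)
  ext y
  rw [mem_mergeSet_singleton_iff_frequently, Set.mem_singleton_iff]
  constructor
  · intro hy
    obtain ⟨m, hmy, hmn⟩ := (hy.and_eventually pow_eventually_eq).exists
    exact hmy.symm.trans hmn
  · rintro rfl
    exact pow_eventually_eq.frequently

lemma exists_pow_succ_eq_of_mergeSet_singleton_eq (h : mergeSet {x} = {y}) :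
    ∃ n, 1 ≤ n ∧ x ^ (n + 1) = x ^ n := by
  have hy : y ∈ mergeSet {x} := h ▸ Set.mem_singleton y
  have hxy : x * y = y := by
    have hmem : x * y ∈ mergeSet {x} :=
      mul_mergeSet_subset (Set.mul_mem_mul (Set.mem_singleton x) hy)
    rwa [h] at hmem
  obtain ⟨n, hn, rfl⟩ :=
    frequently_atTop.mp (mem_mergeSet_singleton_iff_frequently.mp hy) 1
  exact ⟨n, hn, by rwa [pow_succ']⟩

end Merge

section Omega

variable {M : Type*} {om : M → M}

lemma mul_om_self [Mul M] (homsq : ∀ x : M, om (x * x) = om x)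
    (hommul : ∀ x y : M, om (x * y) = x * om (y * x)) (x : M) : x * om x = om x := by
  simpa only [homsq] using (hommul x x).symm

variable [Monoid M]

lemma mem_genSubsemigroup_singleton {x y : M} :
    y ∈ genSubsemigroup {x} ↔ ∃ n, 1 ≤ n ∧ x ^ n = y := by
  constructor
  · rintro ⟨l, hl, hx, rfl⟩
    exact ⟨l.length, List.length_pos_iff.mpr hl, (List.prod_eq_pow_card l x hx).symm⟩
  · rintro ⟨n, hn, rfl⟩
    exact ⟨List.replicate n x, mt (List.replicate_eq_nil_iff x).mp (by omega),
      fun _ ha => List.eq_of_mem_replicate ha, List.prod_replicate n x⟩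

lemma bigOmega_singleton {x : M} (hompow : ∀ n : ℕ, 1 ≤ n → om (x ^ n) = om x)
    (homself : x * om x = om x) : bigOmega om {x} = {om x} := by
  ext z
  rw [Set.mem_singleton_iff]
  constructor
  · rintro ⟨p, hp, q, hq, rfl⟩
    obtain ⟨m, -, rfl⟩ := mem_genSubsemigroup_singleton.mp hp
    obtain ⟨n, hn, rfl⟩ := mem_genSubsemigroup_singleton.mp hq
    rw [hompow n hn, pow_mul_eq_of_mul_eq homself]
  · rintro rfl
    have hx : x ∈ genSubsemigroup {x} := mem_genSubsemigroup_singleton.mpr ⟨1, le_rfl, pow_one x⟩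
    exact ⟨x, hx, x, hx, homself.symm⟩

end Omega

section Saturation

variable {M : Type*} [Monoid M] {om : M → M} {X : Set M}

lemma singleton_mem_satColl (x : M) : {x} ∈ satColl om :=
  fun _ hC => hC.1 x

lemma mergeSet_mem_satColl (hX : X ∈ satColl om) : mergeSet X ∈ satColl om :=
  fun C hC => hC.2.2.1 X (hX C hC)

lemma exists_eq_singleton_of_mem_satColl
    (hmerge : ∀ x : M, ∃ y, mergeSet {x} = {y}) (homega : ∀ x : M, ∃ y, bigOmega om {x} = {y})
    (hX : X ∈ satColl om) : ∃ x, X = {x} := by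
  refine hX {Y | ∃ y, Y = {y}} ⟨fun x => ⟨x, rfl⟩, ?mul, ?merge, ?omega⟩
  case mul =>
    rintro _ ⟨x, rfl⟩ _ ⟨y, rfl⟩
    exact ⟨x * y, Set.singleton_mul_singleton⟩
  case merge =>
    rintro _ ⟨x, rfl⟩
    exact hmerge x
  case omega =>
    rintro _ ⟨x, rfl⟩
    exact homega x

end Saturation

theorem stmt14_general {M : Type*} [Monoid M] (om : M → M)
    (hompow : ∀ x : M, ∀ n : ℕ, 1 ≤ n → om (x ^ n) = om x)
    (homself : ∀ x : M, x * om x = om x) :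
    (∀ x : M, ∃ n : ℕ, 1 ≤ n ∧ x ^ (n + 1) = x ^ n) ↔
    (∀ X ∈ satColl om, ∃ x : M, X = {x}) := by
  constructor
  · intro aperiodic X
    apply exists_eq_singleton_of_mem_satColl
    · intro x
      obtain ⟨n, -, hn⟩ := aperiodic x
      exact ⟨x ^ n, mergeSet_singleton_of_pow_succ_eq hn⟩
    · exact fun x => ⟨om x, bigOmega_singleton (hompow x) (homself x)⟩
  · intro singletons x
    obtain ⟨y, hy⟩ := singletons _ (mergeSet_mem_satColl (singleton_mem_satColl x))
    exact exists_pow_succ_eq_of_mergeSet_singleton_eq hy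

theorem stmt14 {M : Type*} [Monoid M] [Fintype M]
    (om : M → M)
    (hom1 : om 1 = 1)
    (hompow : ∀ x : M, ∀ n : ℕ, 1 ≤ n → om (x ^ n) = om x)
    (hommul : ∀ x y : M, om (x * y) = x * om (y * x)) :
    (∀ x : M, ∃ n : ℕ, 1 ≤ n ∧ x ^ (n + 1) = x ^ n) ↔
    (∀ X ∈ satColl om, ∃ x : M, X = {x}) := by
  have homsq (x : M) : om (x * x) = om x := by rw [← sq, hompow x 2 one_le_two]
  exact stmt14_general om hompow (mul_om_self homsq hommul)
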